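/- Let 1 ≤ p < ∞ be real, let μ be a real number with μ > (n−1) − n/p, and set ν = μ − (n−1)/p′ and ω = π^{(n−1)/(2p′)} · (Γ(n/2)/Γ(1/2))^{1/p} · Γ((μ + n/p − n + 1)/2) / Γ((μ + n/p)/2). Then for every measurable function f : ℝ^n → [0,∞], ( ∫_{S^{n-1}} ∫_ℝ (Rf(θ,t))^p |t|^{νp} dt d*θ )^{1/p} ≤ ω · ( ∫_{ℝ^n} f(x)^p |x|^{μp} dx )^{1/p}. (This is the case k = n−1 of the weighted norm estimate for the k-plane transform: R maps L^p_μ(ℝ^n) boundedly to L^p_ν with norm at most ω.) -/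

import Mathlib

open MeasureTheory Metric Real
open scoped ENNReal

noncomputable section

/-- The normalized (probability) surface measure `d*θ` on the unit sphere of
`EuclideanSpace ℝ (Fin n)`. -/
def sphMeasure (n : ℕ) : Measure (sphere (0 : EuclideanSpace ℝ (Fin n)) 1) :=
  ((volume : Measure (EuclideanSpace ℝ (Fin n))).toSphere Set.univ)⁻¹ •
    (volume : Measure (EuclideanSpace ℝ (Fin n))).toSphere

/-- The hyperplane Radon transform: `Rf(θ,t) = ∫_{θ^⊥} f(tθ + y) dy`, where `θ^⊥` carries its
canonical Lebesgue measure as an (n-1)-dimensional inner product space. -/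
def Radon (n : ℕ) (f : EuclideanSpace ℝ (Fin n) → ℝ≥0∞)
    (θ : sphere (0 : EuclideanSpace ℝ (Fin n)) 1) (t : ℝ) : ℝ≥0∞ :=
  ∫⁻ y : ((ℝ ∙ (θ : EuclideanSpace ℝ (Fin n)))ᗮ),
    f (t • (θ : EuclideanSpace ℝ (Fin n)) + (y : EuclideanSpace ℝ (Fin n)))

/-
Let `n` be the dimension and `a = μ + n/p - n > -1`. Apply Hölder's inequality on each hyperplane
with the weight `|x|^{-(n+a)}`, whose Radon transform is again a power, `K |t|^{-(a+1)}`; writing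
`|x|^{-(n+a)}` as a Gamma integral of Gaussians gives `K`. With `g(x) = |x|^{(n+a)(p-1)} f(x)^p`
this bounds `|t|^{νp} (Rf)^p` by `K^{p-1} |t|^a Rg`, and for the right-hand side there is an
identity: by Fubini, the average over `θ` of `∫ |t|^a Rg(θ, t) dt` is the integral of `g(x)` against
the average of `|⟨x, θ⟩|^a`. This average is a multiple of `|x|^a`, found by computing the integral
of `|⟨x, v⟩|^a exp(-|v|²)` over `v` both in polar coordinates and by slicing along `x`. Finally
`|x|^a g(x) = |x|^{μp} f(x)^p`.
-/

open Module

lemma lintegral_ofReal_of_integral_pos {α : Type*} [MeasurableSpace α] {m : Measure α} {f : α → ℝ}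
    (hf : 0 ≤ᵐ[m] f) (hpos : 0 < ∫ x, f x ∂m) :
    ∫⁻ x, ENNReal.ofReal (f x) ∂m = ENNReal.ofReal (∫ x, f x ∂m) :=
  (ofReal_integral_eq_lintegral_ofReal (.of_integral_ne_zero hpos.ne') hf).symm

section GaussianIntegrals

lemma lintegral_rpow_mul_exp_neg_mul_Ioi {s c : ℝ} (hs : 0 < s) (hc : 0 < c) :
    ∫⁻ u in Set.Ioi (0 : ℝ), ENNReal.ofReal (u ^ (s - 1) * rexp (-(c * u))) =
      ENNReal.ofReal (c ^ (-s) * Gamma s) := by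
  have h := integral_rpow_mul_exp_neg_mul_Ioi hs hc
  rw [one_div, inv_rpow hc.le, ← rpow_neg hc.le] at h
  have := Gamma_pos_of_pos hs
  rw [lintegral_ofReal_of_integral_pos _ (h ▸ by positivity), h]
  filter_upwards [ae_restrict_mem measurableSet_Ioi] with u hu
  exact mul_nonneg (rpow_nonneg (le_of_lt hu) _) (exp_pos _).le

lemma lintegral_rpow_mul_exp_neg_sq_Ioi {q : ℝ} (hq : -1 < q) :
    ∫⁻ r in Set.Ioi (0 : ℝ), ENNReal.ofReal (r ^ q * rexp (-r ^ 2)) =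
      ENNReal.ofReal (Gamma ((q + 1) / 2) / 2) := by
  have h := integral_rpow_mul_exp_neg_rpow (p := 2) two_pos hq
  simp only [rpow_two, one_div_mul_eq_div] at h
  have hΓ := Gamma_pos_of_pos (s := (q + 1) / 2) (by linarith)
  rw [lintegral_ofReal_of_integral_pos _ (h ▸ by positivity), h]
  filter_upwards [ae_restrict_mem measurableSet_Ioi] with r hr
  exact mul_nonneg (rpow_nonneg (le_of_lt hr) _) (exp_pos _).le

lemma lintegral_abs_rpow_mul_exp_neg_sq {q : ℝ} (hq : -1 < q) :
    ∫⁻ t : ℝ, ENNReal.ofReal (|t| ^ q * rexp (-t ^ 2)) = ENNReal.ofReal (Gamma ((q + 1) / 2)) := by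
  have h : ∫ t : ℝ, |t| ^ q * rexp (-t ^ 2) = Gamma ((q + 1) / 2) := by
    have h2 := integral_rpow_mul_exp_neg_rpow (p := 2) two_pos hq
    have habs := integral_comp_abs (f := fun t : ℝ => t ^ q * rexp (-t ^ 2))
    simp only [sq_abs] at habs
    simp only [rpow_two] at h2
    rw [habs, h2]
    ring
  have hΓ := Gamma_pos_of_pos (s := (q + 1) / 2) (by linarith)
  rw [lintegral_ofReal_of_integral_pos (.of_forall fun t => ?_) (h ▸ hΓ), h]
  exact mul_nonneg (rpow_nonneg (abs_nonneg t) q) (exp_pos _).le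

lemma ofReal_rpow_neg_eq_lintegral {s c : ℝ} (hs : 0 < s) (hc : 0 < c) :
    ENNReal.ofReal (c ^ (-s)) = ENNReal.ofReal (Gamma s)⁻¹ *
      ∫⁻ u in Set.Ioi (0 : ℝ), ENNReal.ofReal (u ^ (s - 1) * rexp (-(c * u))) := by
  have hΓ := Gamma_pos_of_pos hs
  rw [lintegral_rpow_mul_exp_neg_mul_Ioi hs hc, ← ENNReal.ofReal_mul (by positivity),
    mul_left_comm, inv_mul_cancel₀ hΓ.ne', mul_one]

variable {V : Type*} [NormedAddCommGroup V] [InnerProductSpace ℝ V] [FiniteDimensional ℝ V]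
  [MeasurableSpace V] [BorelSpace V]

lemma lintegral_exp_neg_mul_sq_norm {b : ℝ} (hb : 0 < b) :
    ∫⁻ v : V, ENNReal.ofReal (rexp (-b * ‖v‖ ^ 2)) =
      ENNReal.ofReal ((π / b) ^ (finrank ℝ V / 2 : ℝ)) := by
  have h := GaussianFourier.integral_rexp_neg_mul_sq_norm (V := V) hb
  rw [lintegral_ofReal_of_integral_pos (.of_forall fun _ => (exp_pos _).le)
    (h ▸ by positivity), h]

lemma lintegral_rpow_mul_exp_neg_add_sq_norm_mul (s c : ℝ) {u : ℝ} (hu : 0 < u) :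
    ∫⁻ v : V, ENNReal.ofReal (u ^ s * rexp (-((c + ‖v‖ ^ 2) * u))) =
      ENNReal.ofReal (π ^ (finrank ℝ V / 2 : ℝ)) *
        ENNReal.ofReal (u ^ (s - finrank ℝ V / 2) * rexp (-(c * u))) := by
  have factor (v : V) : ENNReal.ofReal (u ^ s * rexp (-((c + ‖v‖ ^ 2) * u))) =
      ENNReal.ofReal (u ^ s * rexp (-(c * u))) * ENNReal.ofReal (rexp (-u * ‖v‖ ^ 2)) := by
    rw [← ENNReal.ofReal_mul (by positivity), mul_assoc, ← Real.exp_add]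
    ring_nf
  simp_rw [factor]
  rw [lintegral_const_mul' _ _ ENNReal.ofReal_ne_top, lintegral_exp_neg_mul_sq_norm hu,
    ← ENNReal.ofReal_mul (by positivity), ← ENNReal.ofReal_mul (by positivity),
    div_rpow pi_pos.le hu.le, rpow_sub hu]
  ring_nf

lemma lintegral_add_sq_norm_rpow_neg {s c : ℝ} (hc : 0 < c) (hs : (finrank ℝ V : ℝ) / 2 < s) :
    ∫⁻ v : V, ENNReal.ofReal ((c + ‖v‖ ^ 2) ^ (-s)) =
      ENNReal.ofReal (π ^ (finrank ℝ V / 2 : ℝ) * Gamma (s - finrank ℝ V / 2) / Gamma s *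
        c ^ (finrank ℝ V / 2 - s)) := by
  set d : ℝ := finrank ℝ V / 2 with hd
  have hd0 : 0 ≤ d := by positivity
  have hs0 : 0 < s := by linarith
  have := Gamma_pos_of_pos hs0
  calc ∫⁻ v : V, ENNReal.ofReal ((c + ‖v‖ ^ 2) ^ (-s))
    _ = ∫⁻ v : V, ENNReal.ofReal (Gamma s)⁻¹ * ∫⁻ u in Set.Ioi (0 : ℝ),
          ENNReal.ofReal (u ^ (s - 1) * rexp (-((c + ‖v‖ ^ 2) * u))) :=
        lintegral_congr fun v => ofReal_rpow_neg_eq_lintegral hs0 (by positivity)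
    _ = ENNReal.ofReal (Gamma s)⁻¹ * ∫⁻ u in Set.Ioi (0 : ℝ), ∫⁻ v : V,
          ENNReal.ofReal (u ^ (s - 1) * rexp (-((c + ‖v‖ ^ 2) * u))) := by
        rw [lintegral_const_mul' _ _ ENNReal.ofReal_ne_top, lintegral_lintegral_swap (by fun_prop)]
    _ = ENNReal.ofReal (Gamma s)⁻¹ * (ENNReal.ofReal (π ^ d) * ∫⁻ u in Set.Ioi (0 : ℝ),
          ENNReal.ofReal (u ^ (s - d - 1) * rexp (-(c * u)))) := by
        rw [setLIntegral_congr_fun measurableSet_Ioi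
            fun u hu => lintegral_rpow_mul_exp_neg_add_sq_norm_mul (s - 1) c hu,
          lintegral_const_mul' _ _ ENNReal.ofReal_ne_top, ← hd]
        simp_rw [sub_right_comm s 1 d]
    _ = ENNReal.ofReal (π ^ d * Gamma (s - d) / Gamma s * c ^ (d - s)) := by
        rw [lintegral_rpow_mul_exp_neg_mul_Ioi (by linarith) hc, neg_sub,
          ← ENNReal.ofReal_mul (by positivity), ← ENNReal.ofReal_mul (by positivity)]
        ring_nf

end GaussianIntegrals

lemma rpow_lintegral_le_rpow_lintegral_mul_lintegral {α : Type*} [MeasurableSpace α]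
    {m : Measure α} {p : ℝ} (hp : 1 ≤ p) {f w : α → ℝ≥0∞} (hf : Measurable f) (hw : Measurable w)
    (hw0 : ∀ x, w x ≠ 0) (hwt : ∀ x, w x ≠ ⊤) :
    (∫⁻ x, f x ∂m) ^ p ≤ (∫⁻ x, w x ∂m) ^ (p - 1) * ∫⁻ x, w x ^ (1 - p) * f x ^ p ∂m := by
  rcases hp.eq_or_lt with rfl | hp
  · simp
  have hp0 : 0 < p := by linarith
  have hp1 : 0 < p - 1 := by linarith
  have holder := ENNReal.lintegral_mul_le_Lp_mul_Lq m (HolderConjugate.conjExponent hp)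
    (f := fun x => w x ^ (-((p - 1) / p)) * f x) (g := fun x => w x ^ ((p - 1) / p))
    (by fun_prop) (by fun_prop)
  have product (x : α) : ((fun x => w x ^ (-((p - 1) / p)) * f x) *
      fun x => w x ^ ((p - 1) / p)) x = f x := by
    rw [Pi.mul_apply, mul_right_comm, ← ENNReal.rpow_add _ _ (hw0 x) (hwt x), neg_add_cancel,
      ENNReal.rpow_zero, one_mul]
  have left_rpow (x : α) : (w x ^ (-((p - 1) / p)) * f x) ^ p = w x ^ (1 - p) * f x ^ p := by
    rw [ENNReal.mul_rpow_of_nonneg _ _ hp0.le, ← ENNReal.rpow_mul, neg_mul,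
      div_mul_cancel₀ _ hp0.ne', neg_sub]
  have right_rpow (x : α) : (w x ^ ((p - 1) / p)) ^ p.conjExponent = w x := by
    rw [← ENNReal.rpow_mul, Real.conjExponent, div_mul_div_cancel₀ hp0.ne', div_self hp1.ne',
      ENNReal.rpow_one]
  simp_rw [product, left_rpow, right_rpow] at holder
  refine (ENNReal.rpow_le_rpow holder hp0.le).trans_eq ?_
  rw [ENNReal.mul_rpow_of_nonneg _ _ hp0.le, ← ENNReal.rpow_mul, ← ENNReal.rpow_mul,
    one_div_mul_cancel hp0.ne', ENNReal.rpow_one, Real.conjExponent, one_div_div,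
    div_mul_cancel₀ _ hp0.ne', mul_comm]

section PolarCoordinates

variable {E : Type*} [NormedAddCommGroup E] [NormedSpace ℝ E] [FiniteDimensional ℝ E]
  [Nontrivial E] [MeasurableSpace E] [BorelSpace E] (μ : Measure E) [μ.IsAddHaarMeasure]

lemma lintegral_eq_lintegral_toSphere {f : E → ℝ≥0∞} (hf : Measurable f) :
    ∫⁻ x, f x ∂μ = ∫⁻ θ : sphere (0 : E) 1, ∫⁻ r in Set.Ioi (0 : ℝ),
      ENNReal.ofReal (r ^ (finrank ℝ E - 1)) * f (r • (θ : E)) ∂volume ∂μ.toSphere := by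
  have hmeas : Measurable fun z : sphere (0 : E) 1 × Set.Ioi (0 : ℝ) =>
      f ((z.2 : ℝ) • (z.1 : E)) := by
    fun_prop
  have polar_apply (x : ({0}ᶜ : Set E)) : f ((homeomorphUnitSphereProd E x).2.1 •
      (homeomorphUnitSphereProd E x).1.1) = f x := by
    have : ‖(x : E)‖ ≠ 0 := norm_ne_zero_iff.2 x.2
    simp [smul_smul, this]
  calc ∫⁻ x, f x ∂μ
    _ = ∫⁻ x : ({0}ᶜ : Set E), f x ∂μ.comap Subtype.val := by
        rw [lintegral_subtype_comap (measurableSet_singleton _).compl, restrict_compl_singleton]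
    _ = ∫⁻ z, f (z.2.1 • z.1.1) ∂μ.toSphere.prod (Measure.volumeIoiPow (finrank ℝ E - 1)) := by
        simp_rw [← μ.measurePreserving_homeomorphUnitSphereProd.lintegral_comp hmeas, polar_apply]
    _ = _ := by
        rw [lintegral_prod _ hmeas.aemeasurable]
        refine lintegral_congr fun θ => ?_
        rw [Measure.volumeIoiPow,
          lintegral_withDensity_eq_lintegral_mul _ (by fun_prop) (by fun_prop)]
        exact lintegral_subtype_comap measurableSet_Ioi
          fun r : ℝ => ENNReal.ofReal (r ^ (finrank ℝ E - 1)) * f (r • (θ : E))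

lemma lintegral_mul_exp_neg_sq_norm_of_homogeneous {h : E → ℝ≥0∞} (h_meas : Measurable h) {a : ℝ}
    (ha : 0 < finrank ℝ E + a)
    (hom : ∀ r : ℝ, 0 < r → ∀ x, h (r • x) = ENNReal.ofReal r ^ a * h x) :
    ∫⁻ x, h x * ENNReal.ofReal (rexp (-‖x‖ ^ 2)) ∂μ =
      (∫⁻ θ, h (θ : E) ∂μ.toSphere) * ENNReal.ofReal (Gamma ((finrank ℝ E + a) / 2) / 2) := by
  have radial (θ : sphere (0 : E) 1) : ∀ r ∈ Set.Ioi (0 : ℝ),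
      ENNReal.ofReal (r ^ (finrank ℝ E - 1)) *
        (h (r • (θ : E)) * ENNReal.ofReal (rexp (-‖r • (θ : E)‖ ^ 2))) =
      h θ * ENNReal.ofReal (r ^ (finrank ℝ E - 1 + a) * rexp (-r ^ 2)) := by
    intro r (hr : 0 < r)
    rw [hom r hr, norm_smul, norm_eq_of_mem_sphere, mul_one, norm_eq_abs, sq_abs,
      ENNReal.ofReal_rpow_of_pos hr, rpow_add hr, ← Nat.cast_pred finrank_pos, rpow_natCast,
      ENNReal.ofReal_mul (by positivity), ENNReal.ofReal_mul (by positivity)]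
    ring
  rw [lintegral_eq_lintegral_toSphere μ (by fun_prop), ← lintegral_mul_const _ (by fun_prop)]
  refine lintegral_congr fun θ => ?_
  rw [setLIntegral_congr_fun measurableSet_Ioi (radial θ), lintegral_const_mul _ (by fun_prop),
    lintegral_rpow_mul_exp_neg_sq_Ioi (by linarith)]
  ring_nf

end PolarCoordinates

section RadonTransform

variable {E : Type*} [NormedAddCommGroup E] [InnerProductSpace ℝ E]

lemma inner_smul_add_orthogonal {θ : E} (hθ : ‖θ‖ = 1) (t : ℝ) (y : (ℝ ∙ θ)ᗮ) :
    inner ℝ θ (t • θ + (y : E)) = t := by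
  have hy : inner ℝ θ (y : E) = 0 := Submodule.mem_orthogonal_singleton_iff_inner_right.1 y.2
  rw [inner_add_right, hy, inner_smul_right, real_inner_self_eq_norm_sq, hθ]
  ring

lemma norm_smul_add_orthogonal_sq {θ : E} (hθ : ‖θ‖ = 1) (t : ℝ) (y : (ℝ ∙ θ)ᗮ) :
    ‖t • θ + (y : E)‖ ^ 2 = t ^ 2 + ‖y‖ ^ 2 := by
  have hy : inner ℝ θ (y : E) = 0 := Submodule.mem_orthogonal_singleton_iff_inner_right.1 y.2
  rw [norm_add_sq_real, real_inner_smul_left, hy, norm_smul, hθ, norm_eq_abs, mul_one, sq_abs,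
    Submodule.coe_norm]
  ring

variable [FiniteDimensional ℝ E]

lemma cast_finrank_orthogonal_span_singleton {θ : E} (hθ : θ ≠ 0) :
    (finrank ℝ (ℝ ∙ θ)ᗮ : ℝ) = finrank ℝ E - 1 := by
  rw [← (ℝ ∙ θ).finrank_add_finrank_orthogonal, finrank_span_singleton hθ]
  push_cast
  ring

variable [MeasurableSpace E] [BorelSpace E]

/-- The hyperplane Radon transform on a finite-dimensional inner product space. The direction `θ`
may be any vector, but `radonTransform f θ t` integrates over the hyperplane at signed distance `t`
from the origin only if `θ` is a unit vector. -/
def radonTransform (f : E → ℝ≥0∞) (θ : E) (t : ℝ) : ℝ≥0∞ :=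
  ∫⁻ y : (ℝ ∙ θ)ᗮ, f (t • θ + y)

lemma lintegral_radonTransform {θ : E} (hθ : ‖θ‖ = 1) {f : E → ℝ≥0∞} (hf : Measurable f) :
    ∫⁻ t, radonTransform f θ t = ∫⁻ x, f x := by
  have decomposition := (ℝ ∙ θ).orthogonalDecomposition.symm.measurePreserving.comp
    (WithLp.volume_preserving_toLp (U := (ℝ ∙ θ)) (V := (ℝ ∙ θ)ᗮ))
  have hmeas := hf.comp decomposition.measurable
  have line := (LinearIsometryEquiv.toSpanUnitSingleton (𝕜 := ℝ) θ hθ).measurePreserving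
  rw [← decomposition.lintegral_comp hf, Measure.volume_eq_prod]
  refine .trans ?_ (lintegral_prod _ hmeas.aemeasurable).symm
  exact line.lintegral_comp hmeas.lintegral_prod_right'

lemma lintegral_mul_radonTransform {θ : E} (hθ : ‖θ‖ = 1) {φ : ℝ → ℝ≥0∞} (hφ : Measurable φ)
    {f : E → ℝ≥0∞} (hf : Measurable f) :
    ∫⁻ t, φ t * radonTransform f θ t = ∫⁻ x, φ (inner ℝ θ x) * f x := by
  rw [← lintegral_radonTransform hθ (by fun_prop)]
  refine lintegral_congr fun t => ?_
  simp_rw [radonTransform, inner_smul_add_orthogonal hθ]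
  rw [lintegral_const_mul _ (by fun_prop)]

lemma radonTransform_exp_neg_sq_norm {θ : E} (hθ : ‖θ‖ = 1) (t : ℝ) :
    radonTransform (fun x : E => ENNReal.ofReal (rexp (-‖x‖ ^ 2))) θ t =
      ENNReal.ofReal (rexp (-t ^ 2)) * ENNReal.ofReal (π ^ ((finrank ℝ E - 1 : ℝ) / 2)) := by
  have hθ0 : θ ≠ 0 := norm_ne_zero_iff.1 (hθ ▸ one_ne_zero)
  have gaussian := lintegral_exp_neg_mul_sq_norm (V := (ℝ ∙ θ)ᗮ) one_pos
  rw [div_one, cast_finrank_orthogonal_span_singleton hθ0] at gaussian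
  rw [← gaussian, ← lintegral_const_mul _ (by fun_prop)]
  refine lintegral_congr fun y => ?_
  simp only [norm_smul_add_orthogonal_sq hθ]
  rw [← ENNReal.ofReal_mul (exp_pos _).le, ← Real.exp_add]
  ring_nf

/-- The constant `K` in `R(|x|^{-(n+a)})(θ, t) = K |t|^{-(a+1)}`, where `R` is the hyperplane Radon
transform on an `n`-dimensional space. -/
def radonPowerConst (n a : ℝ) : ℝ :=
  π ^ ((n - 1) / 2) * Gamma ((a + 1) / 2) / Gamma ((n + a) / 2)

lemma radonPowerConst_pos {n a : ℝ} (hn : 1 ≤ n) (ha : -1 < a) : 0 < radonPowerConst n a := by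
  have := Gamma_pos_of_pos (s := (a + 1) / 2) (by linarith)
  have := Gamma_pos_of_pos (s := (n + a) / 2) (by linarith)
  unfold radonPowerConst
  positivity

lemma radonTransform_norm_rpow_neg {θ : E} (hθ : ‖θ‖ = 1) {a : ℝ} (ha : -1 < a) {t : ℝ}
    (ht : t ≠ 0) :
    radonTransform (fun x : E => ENNReal.ofReal ‖x‖ ^ (-(finrank ℝ E + a))) θ t =
      ENNReal.ofReal (radonPowerConst (finrank ℝ E) a) * ENNReal.ofReal |t| ^ (-(a + 1)) := by
  set n : ℝ := (finrank ℝ E : ℝ)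
  have hdim : (finrank ℝ (ℝ ∙ θ)ᗮ : ℝ) = n - 1 :=
    cast_finrank_orthogonal_span_singleton (norm_ne_zero_iff.1 (hθ ▸ one_ne_zero))
  have ht2 : 0 < t ^ 2 := by positivity
  have hpow (y : (ℝ ∙ θ)ᗮ) : ENNReal.ofReal ‖t • θ + (y : E)‖ ^ (-(n + a)) =
      ENNReal.ofReal ((t ^ 2 + ‖y‖ ^ 2) ^ (-((n + a) / 2))) := by
    have hsq := norm_smul_add_orthogonal_sq hθ t y
    have hpos : 0 < ‖t • θ + (y : E)‖ := by
      refine (norm_nonneg _).lt_of_ne' fun h => ?_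
      rw [h] at hsq
      nlinarith [sq_nonneg ‖y‖]
    rw [← hsq, ENNReal.ofReal_rpow_of_pos hpos, ← rpow_natCast, ← rpow_mul hpos.le]
    push_cast
    ring_nf
  have habs : (t ^ 2) ^ ((n - 1) / 2 - (n + a) / 2) = |t| ^ (-(a + 1)) := by
    rw [← sq_abs, ← rpow_natCast, ← rpow_mul (abs_nonneg t)]
    push_cast
    ring_nf
  have bracket := lintegral_add_sq_norm_rpow_neg (V := (ℝ ∙ θ)ᗮ) (s := (n + a) / 2) ht2
    (by linarith)
  rw [hdim, habs,
    show (n + a) / 2 - (n - 1) / 2 = (a + 1) / 2 by ring,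
    ENNReal.ofReal_mul' (by positivity), ← ENNReal.ofReal_rpow_of_pos (abs_pos.2 ht)] at bracket
  simp_rw [radonTransform, hpow]
  exact bracket

lemma radonTransform_rpow_le {θ : E} (hθ : ‖θ‖ = 1) {p a : ℝ} (hp : 1 ≤ p) (ha : -1 < a)
    {f : E → ℝ≥0∞} (hf : Measurable f) {t : ℝ} (ht : t ≠ 0) :
    radonTransform f θ t ^ p ≤
      ENNReal.ofReal (radonPowerConst (finrank ℝ E) a) ^ (p - 1) *
        (ENNReal.ofReal |t| ^ (-((a + 1) * (p - 1))) *
          radonTransform (fun x => ENNReal.ofReal ‖x‖ ^ ((finrank ℝ E + a) * (p - 1)) * f x ^ p)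
            θ t) := by
  have hx0 (y : (ℝ ∙ θ)ᗮ) : ENNReal.ofReal ‖t • θ + (y : E)‖ ≠ 0 := by
    rw [ENNReal.ofReal_ne_zero_iff, norm_pos_iff]
    intro h
    have := inner_smul_add_orthogonal hθ t y
    rw [h, inner_zero_right] at this
    exact ht this.symm
  have holder := rpow_lintegral_le_rpow_lintegral_mul_lintegral (m := volume) hp
    (f := fun y : (ℝ ∙ θ)ᗮ => f (t • θ + y))
    (w := fun y => ENNReal.ofReal ‖t • θ + (y : E)‖ ^ (-(finrank ℝ E + a)))
    (by fun_prop) (by fun_prop)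
    (fun y => (ENNReal.rpow_pos (pos_iff_ne_zero.2 (hx0 y)) ENNReal.ofReal_ne_top).ne')
    (fun y => ENNReal.rpow_ne_top_of_ne_zero (hx0 y) ENNReal.ofReal_ne_top)
  have weight := radonTransform_norm_rpow_neg hθ ha ht
  rw [radonTransform] at weight
  rw [weight] at holder
  refine holder.trans_eq ?_
  simp_rw [← ENNReal.rpow_mul]
  rw [ENNReal.mul_rpow_of_nonneg _ _ (by linarith), ← ENNReal.rpow_mul, mul_assoc, neg_mul]
  simp_rw [neg_mul_comm, neg_sub]
  rfl

lemma lintegral_abs_inner_rpow_mul_exp_neg_sq_norm {a : ℝ} (ha : -1 < a) {x : E} (hx : x ≠ 0) :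
    ∫⁻ v : E, ENNReal.ofReal |inner ℝ x v| ^ a * ENNReal.ofReal (rexp (-‖v‖ ^ 2)) =
      ENNReal.ofReal (π ^ ((finrank ℝ E - 1 : ℝ) / 2) * Gamma ((a + 1) / 2)) *
        ENNReal.ofReal ‖x‖ ^ a := by
  have hnorm : 0 < ‖x‖ := norm_pos_iff.2 hx
  set θ : E := ‖x‖⁻¹ • x
  have hθ : ‖θ‖ = 1 := norm_smul_inv_norm hx
  have scale (v : E) : ENNReal.ofReal |inner ℝ x v| ^ a =
      ENNReal.ofReal ‖x‖ ^ a * ENNReal.ofReal |inner ℝ θ v| ^ a := by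
    rw [← ENNReal.mul_rpow_of_ne_top ENNReal.ofReal_ne_top ENNReal.ofReal_ne_top,
      ← ENNReal.ofReal_mul hnorm.le, real_inner_smul_left, abs_mul, abs_inv, abs_norm,
      mul_inv_cancel_left₀ hnorm.ne']
  have radial : ∫⁻ t : ℝ, ENNReal.ofReal |t| ^ a * ENNReal.ofReal (rexp (-t ^ 2)) =
      ENNReal.ofReal (Gamma ((a + 1) / 2)) := by
    rw [← lintegral_abs_rpow_mul_exp_neg_sq ha]
    refine lintegral_congr_ae ?_
    filter_upwards [Measure.ae_ne volume 0] with t ht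
    rw [ENNReal.ofReal_rpow_of_pos (abs_pos.2 ht), ← ENNReal.ofReal_mul (by positivity)]
  have sliced := lintegral_mul_radonTransform hθ (φ := fun t => ENNReal.ofReal |t| ^ a)
    (by fun_prop) (f := fun v : E => ENNReal.ofReal (rexp (-‖v‖ ^ 2))) (by fun_prop)
  simp_rw [radonTransform_exp_neg_sq_norm hθ, ← mul_assoc] at sliced
  simp_rw [scale, mul_assoc]
  rw [lintegral_const_mul _ (by fun_prop), ← sliced, lintegral_mul_const _ (by fun_prop), radial,
    ENNReal.ofReal_mul (by positivity)]
  ring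

end RadonTransform

section SphericalAverage

variable (E : Type*) [NormedAddCommGroup E] [InnerProductSpace ℝ E] [FiniteDimensional ℝ E]
  [MeasurableSpace E] [BorelSpace E]

/-- The normalized surface measure on the unit sphere of a nontrivial finite-dimensional inner
product space. -/
def normalizedSphereMeasure : Measure (sphere (0 : E) 1) :=
  ((volume : Measure E).toSphere Set.univ)⁻¹ • (volume : Measure E).toSphere

instance : SFinite (normalizedSphereMeasure E) := by
  unfold normalizedSphereMeasure
  infer_instance

variable {E} [Nontrivial E]

lemma toSphere_univ_eq_ofReal :
    (volume : Measure E).toSphere Set.univ =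
      ENNReal.ofReal (2 * π ^ (finrank ℝ E / 2 : ℝ) / Gamma (finrank ℝ E / 2)) := by
  have hn : (0 : ℝ) < finrank ℝ E := Nat.cast_pos.2 finrank_pos
  have hsqrt : √π ^ finrank ℝ E = π ^ (finrank ℝ E / 2 : ℝ) := by
    rw [sqrt_eq_rpow, ← rpow_natCast, ← rpow_mul pi_pos.le, one_div_mul_eq_div]
  rw [Measure.toSphere_apply_univ, InnerProductSpace.volume_ball, hsqrt, ENNReal.ofReal_one,
    one_pow, one_mul, ← ENNReal.ofReal_natCast, ← ENNReal.ofReal_mul hn.le,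
    Gamma_add_one (by positivity)]
  congr 1
  field_simp

lemma lintegral_normalizedSphereMeasure_of_homogeneous {h : E → ℝ≥0∞} (h_meas : Measurable h)
    {a : ℝ} (ha : 0 < finrank ℝ E + a)
    (hom : ∀ r : ℝ, 0 < r → ∀ x, h (r • x) = ENNReal.ofReal r ^ a * h x) :
    ∫⁻ θ, h (θ : E) ∂normalizedSphereMeasure E =
      ENNReal.ofReal (Gamma (finrank ℝ E / 2) / π ^ (finrank ℝ E / 2 : ℝ) /
        Gamma ((finrank ℝ E + a) / 2)) * ∫⁻ x, h x * ENNReal.ofReal (rexp (-‖x‖ ^ 2)) := by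
  have hn : (0 : ℝ) < finrank ℝ E := Nat.cast_pos.2 finrank_pos
  have := Gamma_pos_of_pos (half_pos hn)
  have := Gamma_pos_of_pos (half_pos ha)
  rw [lintegral_mul_exp_neg_sq_norm_of_homogeneous volume h_meas ha hom, normalizedSphereMeasure,
    lintegral_smul_measure, toSphere_univ_eq_ofReal, ← ENNReal.ofReal_inv_of_pos (by positivity),
    mul_left_comm, ← ENNReal.ofReal_mul (by positivity), smul_eq_mul, mul_comm]
  congr 2
  field_simp

lemma lintegral_normalizedSphereMeasure_abs_inner_rpow {a : ℝ} (ha : -1 < a) {x : E}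
    (hx : x ≠ 0) :
    ∫⁻ θ, ENNReal.ofReal |inner ℝ x (θ : E)| ^ a ∂normalizedSphereMeasure E =
      ENNReal.ofReal (Gamma (finrank ℝ E / 2) / π ^ (finrank ℝ E / 2 : ℝ) *
        radonPowerConst (finrank ℝ E) a) * ENNReal.ofReal ‖x‖ ^ a := by
  have hn : (1 : ℝ) ≤ finrank ℝ E := Nat.one_le_cast.2 finrank_pos
  have := Gamma_pos_of_pos (s := finrank ℝ E / 2) (by linarith)
  have hΓa := Gamma_pos_of_pos (s := (finrank ℝ E + a) / 2) (by linarith)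
  have hom (r : ℝ) (hr : 0 < r) (v : E) : ENNReal.ofReal |inner ℝ x (r • v)| ^ a =
      ENNReal.ofReal r ^ a * ENNReal.ofReal |inner ℝ x v| ^ a := by
    rw [← ENNReal.mul_rpow_of_ne_top ENNReal.ofReal_ne_top ENNReal.ofReal_ne_top,
      ← ENNReal.ofReal_mul hr.le, real_inner_smul_right, abs_mul, abs_of_pos hr]
  rw [lintegral_normalizedSphereMeasure_of_homogeneous
      (h := fun v => ENNReal.ofReal |inner ℝ x v| ^ a) (by fun_prop) (by linarith) hom,
    lintegral_abs_inner_rpow_mul_exp_neg_sq_norm ha hx, ← mul_assoc,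
    ← ENNReal.ofReal_mul (by positivity), radonPowerConst]
  congr 2
  ring

lemma lintegral_lintegral_abs_rpow_mul_radonTransform {a : ℝ} (ha : -1 < a) {f : E → ℝ≥0∞}
    (hf : Measurable f) :
    ∫⁻ θ, ∫⁻ t, ENNReal.ofReal |t| ^ a * radonTransform f θ t ∂volume ∂normalizedSphereMeasure E =
      ENNReal.ofReal (Gamma (finrank ℝ E / 2) / π ^ (finrank ℝ E / 2 : ℝ) *
        radonPowerConst (finrank ℝ E) a) * ∫⁻ x, ENNReal.ofReal ‖x‖ ^ a * f x := by
  calc ∫⁻ θ, ∫⁻ t, ENNReal.ofReal |t| ^ a * radonTransform f θ t ∂volume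
        ∂normalizedSphereMeasure E
    _ = ∫⁻ θ, ∫⁻ x, ENNReal.ofReal |inner ℝ (θ : E) x| ^ a * f x ∂volume
          ∂normalizedSphereMeasure E :=
        lintegral_congr fun θ => lintegral_mul_radonTransform (norm_eq_of_mem_sphere θ)
          (φ := fun t => ENNReal.ofReal |t| ^ a) (by fun_prop) hf
    _ = ∫⁻ x, (∫⁻ θ, ENNReal.ofReal |inner ℝ x (θ : E)| ^ a ∂normalizedSphereMeasure E) * f x := by
        rw [lintegral_lintegral_swap (by fun_prop)]
        refine lintegral_congr fun x => ?_
        rw [lintegral_mul_const _ (by fun_prop)]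
        simp_rw [real_inner_comm]
    _ = ∫⁻ x, ENNReal.ofReal (Gamma (finrank ℝ E / 2) / π ^ (finrank ℝ E / 2 : ℝ) *
          radonPowerConst (finrank ℝ E) a) * (ENNReal.ofReal ‖x‖ ^ a * f x) := by
        refine lintegral_congr_ae ?_
        filter_upwards [Measure.ae_ne volume 0] with x hx
        rw [lintegral_normalizedSphereMeasure_abs_inner_rpow ha hx, mul_assoc]
    _ = _ := lintegral_const_mul _ (by fun_prop)

lemma lintegral_radonTransform_rpow_mul_le {p a : ℝ} (hp : 1 ≤ p) (ha : -1 < a)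
    {f : E → ℝ≥0∞} (hf : Measurable f) :
    ∫⁻ θ, ∫⁻ t, radonTransform f θ t ^ p * ENNReal.ofReal |t| ^ (a + (a + 1) * (p - 1)) ∂volume
        ∂normalizedSphereMeasure E ≤
      ENNReal.ofReal (Gamma (finrank ℝ E / 2) / π ^ (finrank ℝ E / 2 : ℝ) *
        radonPowerConst (finrank ℝ E) a ^ p) *
        ∫⁻ x, f x ^ p * ENNReal.ofReal ‖x‖ ^ (a + (finrank ℝ E + a) * (p - 1)) := by
  set n : ℝ := (finrank ℝ E : ℝ)
  set K := radonPowerConst n a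
  have hn : 1 ≤ n := Nat.one_le_cast.2 finrank_pos
  have hK : 0 < K := radonPowerConst_pos hn ha
  have := Gamma_pos_of_pos (s := n / 2) (by linarith)
  let g (x : E) := ENNReal.ofReal ‖x‖ ^ ((n + a) * (p - 1)) * f x ^ p
  have hg : Measurable g := by fun_prop
  have holder (θ : sphere (0 : E) 1) :
      ∫⁻ t, radonTransform f θ t ^ p * ENNReal.ofReal |t| ^ (a + (a + 1) * (p - 1)) ≤
        ENNReal.ofReal K ^ (p - 1) * ∫⁻ t, ENNReal.ofReal |t| ^ a * radonTransform g θ t := by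
    rw [← lintegral_const_mul' _ _ (by finiteness)]
    refine lintegral_mono_ae ?_
    filter_upwards [Measure.ae_ne volume 0] with t ht
    have ht0 : ENNReal.ofReal |t| ≠ 0 := ENNReal.ofReal_ne_zero_iff.2 (abs_pos.2 ht)
    refine (mul_le_mul_left (radonTransform_rpow_le (norm_eq_of_mem_sphere θ) hp ha hf ht)
      _).trans_eq ?_
    rw [mul_assoc, mul_right_comm, ← ENNReal.rpow_add _ _ ht0 ENNReal.ofReal_ne_top,
      neg_add_cancel_comm_assoc]
  refine (lintegral_mono holder).trans_eq ?_
  rw [lintegral_const_mul' _ _ (by finiteness),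
    lintegral_lintegral_abs_rpow_mul_radonTransform ha hg, ← mul_assoc,
    ENNReal.ofReal_rpow_of_pos hK, ← ENNReal.ofReal_mul (by positivity), mul_left_comm,
    ← rpow_add_one hK.ne', sub_add_cancel]
  congr 1
  refine lintegral_congr_ae ?_
  filter_upwards [Measure.ae_ne volume 0] with x hx
  have hx0 : ENNReal.ofReal ‖x‖ ≠ 0 := ENNReal.ofReal_ne_zero_iff.2 (norm_pos_iff.2 hx)
  rw [← mul_assoc, ← ENNReal.rpow_add _ _ hx0 ENNReal.ofReal_ne_top, mul_comm]

end SphericalAverage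

lemma mul_radonPowerConst_rpow_rpow_one_div {n p a : ℝ} (hn : 1 ≤ n) (hp : 1 ≤ p)
    (ha : -1 < a) :
    (Gamma (n / 2) / π ^ (n / 2) * radonPowerConst n a ^ p) ^ (1 / p) =
      π ^ ((n - 1) * (1 - 1 / p) / 2) * (Gamma (n / 2) / Gamma (1 / 2)) ^ (1 / p) *
        Gamma ((a + 1) / 2) / Gamma ((n + a) / 2) := by
  have hp0 : p ≠ 0 := by positivity
  have hK := radonPowerConst_pos hn ha
  have := Gamma_pos_of_pos (s := n / 2) (by linarith)
  have hsurface : Gamma (n / 2) / π ^ (n / 2) =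
      π ^ (-((n - 1) / 2)) * (Gamma (n / 2) / Gamma (1 / 2)) := by
    have hexp : n / 2 = (n - 1) / 2 + 1 / 2 := by ring
    rw [Gamma_one_half_eq, sqrt_eq_rpow, rpow_neg pi_pos.le]
    nth_rw 2 [hexp]
    rw [rpow_add pi_pos]
    field_simp
  have hpi : π ^ ((n - 1) * (1 - 1 / p) / 2) =
      π ^ (-((n - 1) / 2) * (1 / p)) * π ^ ((n - 1) / 2) := by
    rw [← rpow_add pi_pos]
    ring_nf
  rw [hsurface, mul_rpow (by positivity) (by positivity), mul_rpow (by positivity) (by positivity),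
    ← rpow_mul pi_pos.le, ← rpow_mul hK.le, mul_one_div_cancel hp0, rpow_one, hpi, radonPowerConst]
  ring

theorem stmt0_general {E : Type*} [NormedAddCommGroup E] [InnerProductSpace ℝ E]
    [FiniteDimensional ℝ E] [MeasurableSpace E] [BorelSpace E] [Nontrivial E] {n : ℕ}
    (hn : finrank ℝ E = n) {p : ℝ} (hp : 1 ≤ p) {μ ν ω : ℝ} (hμ : μ > ((n : ℝ) - 1) - n / p)
    (hν : ν = μ - ((n : ℝ) - 1) * (1 - 1 / p))
    (hω : ω = π ^ (((n : ℝ) - 1) * (1 - 1 / p) / 2) *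
      (Gamma ((n : ℝ) / 2) / Gamma (1 / 2)) ^ (1 / p) *
      Gamma ((μ + (n : ℝ) / p - n + 1) / 2) / Gamma ((μ + (n : ℝ) / p) / 2))
    {f : E → ℝ≥0∞} (hf : Measurable f) :
    (∫⁻ θ, ∫⁻ t, radonTransform f θ t ^ p * ENNReal.ofReal |t| ^ (ν * p) ∂volume
        ∂normalizedSphereMeasure E) ^ (1 / p) ≤
      ENNReal.ofReal ω * (∫⁻ x, f x ^ p * ENNReal.ofReal ‖x‖ ^ (μ * p)) ^ (1 / p) := by
  subst hn
  set n : ℝ := (finrank ℝ E : ℝ)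
  have hn : 1 ≤ n := Nat.one_le_cast.2 finrank_pos
  have : 0 < p := by linarith
  obtain ⟨a, ha⟩ : ∃ a, a = μ + n / p - n := ⟨_, rfl⟩
  have ha1 : -1 < a := by linarith
  have hna : μ + n / p = n + a := by linarith
  have hνp : ν * p = a + (a + 1) * (p - 1) := by
    rw [hν, ha]
    field_simp
    ring
  have hμp : μ * p = a + (n + a) * (p - 1) := by
    rw [ha]
    field_simp
    ring
  rw [← ha, hna, ← mul_radonPowerConst_rpow_rpow_one_div hn hp ha1] at hω
  have hK := radonPowerConst_pos hn ha1
  have := Gamma_pos_of_pos (s := n / 2) (by linarith)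
  rw [hω, hνp, hμp, ← ENNReal.ofReal_rpow_of_pos (by positivity),
    ← ENNReal.mul_rpow_of_nonneg _ _ (by positivity)]
  exact ENNReal.rpow_le_rpow (lintegral_radonTransform_rpow_mul_le hp ha1 hf) (by positivity)

/-- Weighted `L^p` norm estimate for the hyperplane Radon transform (case `k = n-1` of
Rubin's weighted norm estimate, boundedness part). -/
theorem stmt0 (n : ℕ) (hn : 2 ≤ n) (p : ℝ) (hp : 1 ≤ p) (μ ν ω : ℝ)
    (hμ : μ > ((n : ℝ) - 1) - n / p)
    (hν : ν = μ - ((n : ℝ) - 1) * (1 - 1 / p))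
    (hω : ω = Real.pi ^ (((n : ℝ) - 1) * (1 - 1 / p) / 2) *
      (Real.Gamma ((n : ℝ) / 2) / Real.Gamma (1 / 2)) ^ (1 / p) *
      Real.Gamma ((μ + (n : ℝ) / p - n + 1) / 2) / Real.Gamma ((μ + (n : ℝ) / p) / 2))
    (f : EuclideanSpace ℝ (Fin n) → ℝ≥0∞) (hf : Measurable f) :
    (∫⁻ θ, ∫⁻ t : ℝ, Radon n f θ t ^ p * ENNReal.ofReal |t| ^ (ν * p) ∂volume
        ∂(sphMeasure n)) ^ (1 / p) ≤
      ENNReal.ofReal ω *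
        (∫⁻ x, f x ^ p * ENNReal.ofReal ‖x‖ ^ (μ * p)) ^ (1 / p) := by
  have : Nontrivial (EuclideanSpace ℝ (Fin n)) :=
    Module.nontrivial_of_finrank_pos (R := ℝ) (by rw [finrank_euclideanSpace_fin]; omega)
  exact stmt0_general finrank_euclideanSpace_fin hp hμ hν hω hf
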